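/- arXiv:math/0211387 — 4 statements merged into one kernel-verified Lean document; each statement's English description precedes it below -/
import Mathlib

section
/- Let τ ∈ [0,1]. For every n ≥ 1 and every permutation σ of {1,…,n}, the pushforward of the urn measure m_n under the coordinate-permutation map x ↦ x ∘ σ equals m_n; that is, the family (m_n) is exchangeable. -/
open MeasureTheory

noncomputable section

/-- The circle `ℝ/ℤ`. -/
abbrev Circle1 : Type := AddCircle (1 : ℝ)

/-- The Pólya-urn type Markov kernel
`κ_n(x, ·) = ((1−τ)·λ + τ·Σ_{i=1}^n δ_{x_i}) / ((1−τ) + nτ)`. -/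
def urnKernel (τ : ℝ) {n : ℕ} (x : Fin n → Circle1) : Measure Circle1 :=
  (ENNReal.ofReal ((1 - τ) + n * τ))⁻¹ •
    (ENNReal.ofReal (1 - τ) • (volume : Measure Circle1)
      + ENNReal.ofReal τ • ∑ i : Fin n, Measure.dirac (x i))

/-- The urn measures: `m 1 = λ` and `m (n+1)` is the image of the measure–kernel
product `m n ⊗ κ_n` under `(x, y) ↦ (x_1, …, x_n, y)`.  (`m 0` is a dummy value.) -/
def urnMeasure (τ : ℝ) : (n : ℕ) → Measure (Fin n → Circle1)
  | 0 => Measure.dirac (fun i => i.elim0)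
  | 1 => (volume : Measure Circle1).map (fun y => fun _ : Fin 1 => y)
  | (n + 2) =>
      (urnMeasure τ (n + 1)).bind
        (fun x => (urnKernel τ x).map (Fin.snoc x))

/-! Let the predictive measure after `n` draws `x` be `aₙ ν + bₙ S` with `S = ∑ δ_{xᵢ}`. Given
these draws, the next two draws `(y, z)` have law
`(aₙ ν + bₙ S)(dy) (aₙ₊₁ ν + bₙ₊₁ S + bₙ₊₁ δ_y)(dz)`. The contribution of `δ_y` lives on the
diagonal, and the rest is a product of two measures that commute, either because `S = 0` (for
`n = 0`) or because `aₙ : bₙ = aₙ₊₁ : bₙ₊₁`; so the last two draws may be swapped. Earlier adjacent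
draws may be swapped by induction, because the predictive measure depends symmetrically on the past.
Adjacent transpositions generate the symmetric group. -/

open scoped ENNReal

section Snoc

variable {E : Type*} {n : ℕ}

theorem snoc_comp_swap_castSucc (x : Fin n → E) (y : E) (i j : Fin n) :
    (Fin.snoc x y : Fin (n + 1) → E) ∘ Equiv.swap i.castSucc j.castSucc =
      Fin.snoc (x ∘ Equiv.swap i j) y := by
  simp only [Equiv.comp_swap_eq_update, Fin.snoc_update, Fin.snoc_castSucc]

theorem snoc_snoc_comp_swap_last (x : Fin n → E) (y z : E) :
    (Fin.snoc (Fin.snoc x y : Fin (n + 1) → E) z : Fin (n + 2) → E) ∘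
        Equiv.swap (Fin.last n).castSucc (Fin.last (n + 1)) =
      Fin.snoc (Fin.snoc x z : Fin (n + 1) → E) y := by
  rw [Equiv.comp_swap_eq_update, Fin.update_snoc_last, ← Fin.snoc_update, Fin.update_snoc_last]
  simp only [Fin.snoc_castSucc, Fin.snoc_last]

variable [MeasurableSpace E]

theorem measurable_snoc :
    Measurable fun p : (Fin n → E) × E ↦ (Fin.snoc p.1 p.2 : Fin (n + 1) → E) := by
  refine measurable_pi_iff.2 (Fin.lastCases ?_ fun i ↦ ?_)
  · simpa only [Fin.snoc_last] using measurable_snd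
  · simpa only [Fin.snoc_castSucc] using measurable_fst.eval

theorem measurable_snoc_left (x : Fin n → E) :
    Measurable fun y ↦ (Fin.snoc x y : Fin (n + 1) → E) :=
  measurable_snoc.comp measurable_prodMk_left

end Snoc

section Perm

variable {E : Type*} [MeasurableSpace E]

theorem measurable_comp_right {ι κ : Type*} (e : ι → κ) : Measurable fun x : κ → E ↦ x ∘ e :=
  measurable_pi_lambda _ fun i ↦ measurable_pi_apply (e i)

theorem measurePreserving_comp_perm_of_swap {n : ℕ} {μ : Measure (Fin (n + 1) → E)}
    (hswap : ∀ i : Fin n, MeasurePreserving (fun x ↦ x ∘ Equiv.swap i.castSucc i.succ) μ μ)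
    (σ : Equiv.Perm (Fin (n + 1))) : MeasurePreserving (fun x ↦ x ∘ σ) μ μ := by
  have hσ : σ ∈ Submonoid.closure (Set.range fun i : Fin n ↦ Equiv.swap i.castSucc i.succ) :=
    Equiv.Perm.mclosure_swap_castSucc_succ n ▸ Submonoid.mem_top σ
  induction hσ using Submonoid.closure_induction with
  | mem _ h => obtain ⟨i, rfl⟩ := h; exact hswap i
  | one => exact MeasurePreserving.id μ
  | mul _ _ _ _ hσ hρ => exact hρ.comp hσ

end Perm

theorem smul_add_smul_prod_comm {E : Type*} [MeasurableSpace E] (μ ν : Measure E) [SFinite μ]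
    [SFinite ν] {a b a' b' : ℝ≥0∞} (h : a * b' = b * a') :
    (a • μ + b • ν).prod (a' • μ + b' • ν) = (a' • μ + b' • ν).prod (a • μ + b • ν) := by
  simp only [Measure.prod_add, Measure.add_prod, Measure.prod_smul_left, Measure.prod_smul_right,
    smul_add, smul_smul, mul_comm a', mul_comm b', h]

/-- The predictive measure `a ν + b ∑ᵢ δ_{xᵢ}` of a Pólya urn with base measure `ν`
after the draws `x`. Any normalising constant is absorbed into the weights `a` and `b`. -/
def polyaKernel {E ι : Type*} [MeasurableSpace E] [Fintype ι] (ν : Measure E) (a b : ℝ≥0∞)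
    (x : ι → E) : Measure E :=
  a • ν + b • ∑ i, Measure.dirac (x i)

/-- The law of the first `n` draws of a Pólya urn whose `(n + 1)`-st draw, given the first `n`
draws `x`, has law `polyaKernel ν (a n) (b n) x`. The first draw has law `a 0 • ν`, and `b 0` has
no effect. -/
def polyaMeasure {E : Type*} [MeasurableSpace E] (ν : Measure E) (a b : ℕ → ℝ≥0∞) :
    (n : ℕ) → Measure (Fin n → E)
  | 0 => Measure.dirac fun i ↦ i.elim0
  | n + 1 => (polyaMeasure ν a b n).bind fun x ↦ (polyaKernel ν (a n) (b n) x).map (Fin.snoc x)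

section PolyaKernel

variable {E ι : Type*} [MeasurableSpace E] [Fintype ι] (ν : Measure E) (a b : ℝ≥0∞)

theorem polyaKernel_comp_perm (x : ι → E) (σ : Equiv.Perm ι) :
    polyaKernel ν a b (x ∘ σ) = polyaKernel ν a b x := by
  simp only [polyaKernel, Function.comp_apply, Equiv.sum_comp σ fun i ↦ Measure.dirac (x i)]

theorem polyaKernel_snoc {n : ℕ} (x : Fin n → E) (y : E) :
    polyaKernel ν a b (Fin.snoc x y : Fin (n + 1) → E) =
      polyaKernel ν a b x + b • Measure.dirac y := by
  simp only [polyaKernel, Fin.sum_univ_castSucc, Fin.snoc_castSucc, Fin.snoc_last, smul_add,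
    add_assoc]

theorem lintegral_polyaKernel (x : ι → E) {f : E → ℝ≥0∞} (hf : Measurable f) :
    ∫⁻ y, f y ∂polyaKernel ν a b x = a * ∫⁻ y, f y ∂ν + b * ∑ i, f (x i) := by
  simp only [polyaKernel, lintegral_add_measure, lintegral_smul_measure,
    lintegral_finsetSum_measure, lintegral_dirac' _ hf, smul_eq_mul]

variable [SFinite ν]

instance instSFinitePolyaKernel (x : ι → E) : SFinite (polyaKernel ν a b x) := by
  unfold polyaKernel
  infer_instance

theorem measurable_lintegral_polyaKernel {f : (ι → E) × E → ℝ≥0∞} (hf : Measurable f) :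
    Measurable fun x ↦ ∫⁻ y, f (x, y) ∂polyaKernel ν a b x := by
  have hdraw (i : ι) : Measurable fun x : ι → E ↦ f (x, x i) :=
    hf.comp (measurable_id.prodMk (measurable_pi_apply i))
  have hsection (x : ι → E) : Measurable fun y ↦ f (x, y) := hf.comp measurable_prodMk_left
  simp only [fun x ↦ lintegral_polyaKernel ν a b x (hsection x)]
  exact (hf.lintegral_prod_right'.const_mul a).add
    ((Finset.measurable_fun_sum _ fun i _ ↦ hdraw i).const_mul b)

theorem measurable_map_snoc_polyaKernel (n : ℕ) :
    Measurable fun x : Fin n → E ↦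
      ((polyaKernel ν a b x).map (Fin.snoc x) : Measure (Fin (n + 1) → E)) := by
  refine Measure.measurable_of_measurable_coe _ fun s hs ↦ ?_
  have hone : Measurable (s.indicator (1 : (Fin (n + 1) → E) → ℝ≥0∞)) :=
    measurable_one.indicator hs
  simp only [← lintegral_indicator_one hs,
    fun x : Fin n → E ↦ lintegral_map hone (measurable_snoc_left x)]
  exact measurable_lintegral_polyaKernel ν a b (hone.comp measurable_snoc)

variable {a b} {a' b' : ℝ≥0∞}

theorem polyaKernel_prod_comm (x : ι → E) (h : Nonempty ι → a * b' = b * a') :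
    (polyaKernel ν a b x).prod (polyaKernel ν a' b' x) =
      (polyaKernel ν a' b' x).prod (polyaKernel ν a b x) := by
  rcases isEmpty_or_nonempty ι with hι | hι
  · simp only [polyaKernel, Finset.univ_eq_empty, Finset.sum_empty, smul_zero, add_zero,
      Measure.prod_smul_left, Measure.prod_smul_right, smul_smul, mul_comm]
  · exact smul_add_smul_prod_comm _ _ (h hι)

theorem lintegral_polyaKernel_snoc_swap {n : ℕ} (x : Fin n → E) (h : n ≠ 0 → a * b' = b * a')
    {g : E → E → ℝ≥0∞} (hg : Measurable (Function.uncurry g)) :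
    ∫⁻ y, ∫⁻ z, g z y ∂polyaKernel ν a' b' (Fin.snoc x y : Fin (n + 1) → E)
        ∂polyaKernel ν a b x =
      ∫⁻ y, ∫⁻ z, g y z ∂polyaKernel ν a' b' (Fin.snoc x y : Fin (n + 1) → E)
        ∂polyaKernel ν a b x := by
  set K := polyaKernel ν a b x
  set K' := polyaKernel ν a' b' x
  have split_diagonal {f : E → E → ℝ≥0∞} (hf : Measurable (Function.uncurry f)) :
      ∫⁻ y, ∫⁻ z, f y z ∂polyaKernel ν a' b' (Fin.snoc x y : Fin (n + 1) → E) ∂K =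
        ∫⁻ y, ∫⁻ z, f y z ∂K' ∂K + ∫⁻ y, b' * f y y ∂K := by
    simp only [polyaKernel_snoc, lintegral_add_measure, lintegral_smul_measure, smul_eq_mul,
      fun y ↦ lintegral_dirac' y (hf.of_uncurry_left (x := y))]
    exact lintegral_add_left hf.lintegral_prod_right _
  have prod_comm : K.prod K' = K'.prod K :=
    polyaKernel_prod_comm ν x fun hn ↦ h (Fin.pos_iff_nonempty.2 hn).ne'
  have off_diagonal : ∫⁻ y, ∫⁻ z, g z y ∂K' ∂K = ∫⁻ y, ∫⁻ z, g y z ∂K' ∂K := by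
    rw [lintegral_lintegral hg.aemeasurable, prod_comm]
    exact (lintegral_prod_symm' _ hg).symm
  rw [split_diagonal hg, split_diagonal (f := fun y z ↦ g z y) (hg.comp measurable_swap),
    off_diagonal]

end PolyaKernel

section PolyaMeasure

variable {E : Type*} [MeasurableSpace E] (ν : Measure E) [SFinite ν] (a b : ℕ → ℝ≥0∞)

theorem lintegral_polyaMeasure_succ (n : ℕ) {f : (Fin (n + 1) → E) → ℝ≥0∞} (hf : Measurable f) :
    ∫⁻ z, f z ∂polyaMeasure ν a b (n + 1) =
      ∫⁻ x, ∫⁻ y, f (Fin.snoc x y) ∂polyaKernel ν (a n) (b n) x ∂polyaMeasure ν a b n := by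
  rw [polyaMeasure, Measure.lintegral_bind
    (measurable_map_snoc_polyaKernel ν (a n) (b n) n).aemeasurable hf.aemeasurable]
  exact lintegral_congr fun x ↦ lintegral_map hf (measurable_snoc_left x)

variable {a b}

theorem measurePreserving_swap_last_polyaMeasure {n : ℕ}
    (h : n ≠ 0 → a n * b (n + 1) = b n * a (n + 1)) :
    MeasurePreserving (fun x ↦ x ∘ Equiv.swap (Fin.last n).castSucc (Fin.last (n + 1)))
      (polyaMeasure ν a b (n + 2)) (polyaMeasure ν a b (n + 2)) := by
  refine ⟨measurable_comp_right _, Measure.ext_of_lintegral _ fun f hf ↦ ?_⟩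
  have hfswap : Measurable fun x ↦
      f (x ∘ Equiv.swap (Fin.last n).castSucc (Fin.last (n + 1))) :=
    hf.comp (measurable_comp_right _)
  have lintegral_two_steps {f : (Fin (n + 2) → E) → ℝ≥0∞} (hf : Measurable f) :=
    (lintegral_polyaMeasure_succ ν a b (n + 1) hf).trans <| lintegral_polyaMeasure_succ ν a b n <|
      measurable_lintegral_polyaKernel ν (a (n + 1)) (b (n + 1)) (hf.comp measurable_snoc)
  rw [lintegral_map hf (measurable_comp_right _), lintegral_two_steps hf,
    lintegral_two_steps hfswap]
  simp only [snoc_snoc_comp_swap_last]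
  refine lintegral_congr fun x ↦ lintegral_polyaKernel_snoc_swap ν x h ?_
    (g := fun y z ↦ f (Fin.snoc (Fin.snoc x y : Fin (n + 1) → E) z))
  exact hf.comp <| measurable_snoc.comp <|
    (measurable_snoc.comp (measurable_const.prodMk measurable_fst)).prodMk measurable_snd

theorem measurePreserving_swap_castSucc_polyaMeasure {n : ℕ} {i j : Fin n}
    (h : MeasurePreserving (fun x ↦ x ∘ Equiv.swap i j)
      (polyaMeasure ν a b n) (polyaMeasure ν a b n)) :
    MeasurePreserving (fun x ↦ x ∘ Equiv.swap i.castSucc j.castSucc)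
      (polyaMeasure ν a b (n + 1)) (polyaMeasure ν a b (n + 1)) := by
  refine ⟨measurable_comp_right _, Measure.ext_of_lintegral _ fun f hf ↦ ?_⟩
  have hfswap : Measurable fun x ↦ f (x ∘ Equiv.swap i.castSucc j.castSucc) :=
    hf.comp (measurable_comp_right _)
  have hstep : Measurable fun x ↦ ∫⁻ y, f (Fin.snoc x y) ∂polyaKernel ν (a n) (b n) x :=
    measurable_lintegral_polyaKernel ν (a n) (b n) (hf.comp measurable_snoc)
  rw [lintegral_map hf (measurable_comp_right _), lintegral_polyaMeasure_succ ν a b n hf,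
    lintegral_polyaMeasure_succ ν a b n hfswap, ← h.lintegral_comp hstep]
  simp only [snoc_comp_swap_castSucc, polyaKernel_comp_perm]

theorem measurePreserving_adjacent_swap_polyaMeasure
    (h : ∀ n ≠ 0, a n * b (n + 1) = b n * a (n + 1)) (n : ℕ) (i : Fin n) :
    MeasurePreserving (fun x ↦ x ∘ Equiv.swap i.castSucc i.succ)
      (polyaMeasure ν a b (n + 1)) (polyaMeasure ν a b (n + 1)) := by
  induction n with
  | zero => exact i.elim0
  | succ n ih =>
    induction i using Fin.lastCases with
    | last => exact measurePreserving_swap_last_polyaMeasure ν (h n)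
    | cast i => exact measurePreserving_swap_castSucc_polyaMeasure ν (ih i)

theorem urnMeasure_exchangeable_general (h : ∀ n ≠ 0, a n * b (n + 1) = b n * a (n + 1)) (n : ℕ)
    (σ : Equiv.Perm (Fin n)) :
    (polyaMeasure ν a b n).map (fun x ↦ x ∘ σ) = polyaMeasure ν a b n := by
  cases n with
  | zero => rw [Subsingleton.elim σ 1]; exact Measure.map_id
  | succ n =>
    exact (measurePreserving_comp_perm_of_swap
      (measurePreserving_adjacent_swap_polyaMeasure ν h n) σ).map_eq

end PolyaMeasure

/-- The weight of `λ` in `urnKernel τ` after `n` draws, except that the first draw gets weight `1`: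
for `τ = 1` the formula of `urnKernel` would give `0`. -/
def urnBaseWeight (τ : ℝ) : ℕ → ℝ≥0∞
  | 0 => 1
  | n + 1 => (ENNReal.ofReal ((1 - τ) + (n + 1 : ℕ) * τ))⁻¹ * ENNReal.ofReal (1 - τ)

/-- The weight of each of the `n` past draws in `urnKernel τ`. -/
def urnAtomWeight (τ : ℝ) (n : ℕ) : ℝ≥0∞ :=
  (ENNReal.ofReal ((1 - τ) + n * τ))⁻¹ * ENNReal.ofReal τ

theorem urnBaseWeight_mul_urnAtomWeight_succ (τ : ℝ) {n : ℕ} (hn : n ≠ 0) :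
    urnBaseWeight τ n * urnAtomWeight τ (n + 1) = urnAtomWeight τ n * urnBaseWeight τ (n + 1) := by
  obtain ⟨k, rfl⟩ := Nat.exists_eq_succ_of_ne_zero hn
  simp only [urnBaseWeight, urnAtomWeight]
  ring

theorem urnKernel_eq_polyaKernel (τ : ℝ) {n : ℕ} (x : Fin (n + 1) → Circle1) :
    urnKernel τ x =
      polyaKernel volume (urnBaseWeight τ (n + 1)) (urnAtomWeight τ (n + 1)) x := by
  simp only [urnKernel, polyaKernel, urnBaseWeight, urnAtomWeight, smul_add, smul_smul]

theorem urnMeasure_eq_polyaMeasure (τ : ℝ) (n : ℕ) :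
    urnMeasure τ n = polyaMeasure volume (urnBaseWeight τ) (urnAtomWeight τ) n := by
  match n with
  | 0 => rfl
  | 1 =>
    rw [urnMeasure, polyaMeasure, polyaMeasure,
      Measure.dirac_bind (measurable_map_snoc_polyaKernel volume _ _ 0)]
    simp only [polyaKernel, urnBaseWeight, one_smul, Finset.univ_eq_empty, Finset.sum_empty,
      smul_zero, add_zero]
    congr with y i
  | n + 2 =>
    rw [urnMeasure, polyaMeasure, urnMeasure_eq_polyaMeasure τ (n + 1)]
    simp only [urnKernel_eq_polyaKernel]

/-- for every `n ≥ 1` and every permutation `σ` of the coordinates, the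
pushforward of the urn measure `m_n` under `x ↦ x ∘ σ` equals `m_n`: the family
`(m_n)` is exchangeable. -/
theorem urnMeasure_exchangeable (τ : ℝ) (hτ0 : 0 ≤ τ) (hτ1 : τ ≤ 1)
    (n : ℕ) (hn : 1 ≤ n) (σ : Equiv.Perm (Fin n)) :
    (urnMeasure τ n).map (fun x => x ∘ σ) = urnMeasure τ n := by
  rw [urnMeasure_eq_polyaMeasure]
  exact urnMeasure_exchangeable_general _ (fun _ ↦ urnBaseWeight_mul_urnAtomWeight_succ τ) n σ

end
end

section
/- Let τ ∈ [0,1], n ≥ 1, and let π be a partition of {1,…,n}. Let π' be the partition of {1,…,n+1} obtained from π by adjoining {n+1} as a new singleton block. Then m_{n+1}(A_{π'}) = ((1−τ)/((1−τ)+nτ)) · m_n(A_π). -/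
open MeasureTheory

noncomputable section

/-- For a partition `π` of `{1,…,n}`, the set `A_π` of `x` with `x i = x j` iff `i`
and `j` lie in the same block of `π`. -/
def samePartSet {n : ℕ} (P : Finpartition (Finset.univ : Finset (Fin n))) :
    Set (Fin n → Circle1) :=
  {x | ∀ i j : Fin n, x i = x j ↔ ∃ B ∈ P.parts, i ∈ B ∧ j ∈ B}

/-!
The point `(x, y)` lies in `A_{π'}` exactly when `x ∈ A_π` and `y` avoids the finite set of values
of `x`. The Dirac part of `κ_n(x, ·)` charges only these values and `λ`, being atomless, gives them
no mass, so `κ_n(x, ·)` puts mass `(1 - τ) / ((1 - τ) + n τ)` on the admissible `y`. This does not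
depend on `x`, and integrating it over `A_π` gives the claim.
-/

section General

lemma measurable_finSnoc {n : ℕ} {α : Fin (n + 1) → Type*} [∀ i, MeasurableSpace (α i)] :
    Measurable fun p : (∀ i : Fin n, α i.castSucc) × α (Fin.last n) =>
      (Fin.snoc p.1 p.2 : ∀ i, α i) := by
  refine measurable_pi_lambda _ fun i => ?_
  induction i using Fin.lastCases with
  | last => simpa only [Fin.snoc_last] using measurable_snd
  | cast i => simpa only [Fin.snoc_castSucc] using measurable_fst.eval

lemma measurable_map_measure {α β γ : Type*} [MeasurableSpace α] [MeasurableSpace β]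
    [MeasurableSpace γ] (μ : Measure β) [SFinite μ] {f : α → β → γ}
    (hf : Measurable (Function.uncurry f)) : Measurable fun a => μ.map (f a) := by
  refine Measure.measurable_of_measurable_coe _ fun s hs => ?_
  simp only [Measure.map_apply hf.of_uncurry_left hs]
  exact measurable_measure_prodMk_left (hf hs)

instance measurableConstSMul_measure {α : Type*} [MeasurableSpace α] :
    MeasurableConstSMul ENNReal (Measure α) where
  measurable_const_smul c :=
    Measure.measurable_of_measurable_coe _ fun _ hs => (Measure.measurable_coe hs).const_mul c

instance nullSingletonClass_volume_addCircle (T : ℝ) [Fact (0 < T)] :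
    NullSingletonClass (volume : Measure (AddCircle T)) where
  measure_singleton x := by simpa using AddCircle.volume_closedBall T (x := x) 0

end General

section Urn

variable (τ : ℝ) {n : ℕ}

lemma urnKernel_map {β : Type*} [MeasurableSpace β] (x : Fin n → Circle1) {f : Circle1 → β}
    (hf : Measurable f) :
    (urnKernel τ x).map f =
      (ENNReal.ofReal ((1 - τ) + n * τ))⁻¹ •
        (ENNReal.ofReal (1 - τ) • (volume : Measure Circle1).map f
          + ENNReal.ofReal τ • ∑ i : Fin n, Measure.dirac (f (x i))) := by
  simp only [urnKernel, Measure.map_smul, Measure.map_add _ _ hf,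
    Measure.map_finset_sum' hf.aemeasurable, Measure.map_dirac' hf]

lemma measurable_urnKernel_map {β : Type*} [MeasurableSpace β]
    {f : (Fin n → Circle1) → Circle1 → β} (hf : Measurable (Function.uncurry f)) :
    Measurable fun x => (urnKernel τ x).map (f x) := by
  simp only [urnKernel_map τ _ hf.of_uncurry_left]
  have volume_part : Measurable fun x => (volume : Measure Circle1).map (f x) :=
    measurable_map_measure volume hf
  fun_prop

lemma urnKernel_compl_range (x : Fin n → Circle1) :
    urnKernel τ x (Set.range x)ᶜ =
      ENNReal.ofReal (1 - τ) / ENNReal.ofReal ((1 - τ) + n * τ) := by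
  have volume_part : (volume : Measure Circle1) (Set.range x)ᶜ = 1 := by
    rw [Set.compl_eq_univ_sdiff, measure_sdiff_null ((Set.finite_range x).measure_zero _),
      UnitAddCircle.measure_univ]
  have dirac_part (i : Fin n) : Measure.dirac (x i) (Set.range x)ᶜ = 0 := by simp
  simp only [urnKernel, Measure.smul_apply, Measure.add_apply, Measure.finsetSum_apply,
    volume_part, dirac_part, Finset.sum_const_zero, smul_eq_mul, mul_one, mul_zero, add_zero]
  rw [mul_comm, div_eq_mul_inv]

lemma urnMeasure_succ_apply (hn : 1 ≤ n) {s : Set (Fin (n + 1) → Circle1)}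
    (hs : MeasurableSet s) :
    urnMeasure τ (n + 1) s =
      ∫⁻ x, urnKernel τ x {y | Fin.snoc (α := fun _ => Circle1) x y ∈ s} ∂urnMeasure τ n := by
  obtain ⟨k, rfl⟩ := Nat.exists_eq_add_of_le' hn
  have hsnoc : Measurable (Function.uncurry fun x : Fin (k + 1) → Circle1 =>
      Fin.snoc (α := fun _ => Circle1) x) := measurable_finSnoc
  rw [urnMeasure, Measure.bind_apply hs (measurable_urnKernel_map τ hsnoc).aemeasurable]
  exact lintegral_congr fun x => Measure.map_apply hsnoc.of_uncurry_left hs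

end Urn

section SamePartSet

variable {n : ℕ} {P : Finpartition (Finset.univ : Finset (Fin n))}

lemma mem_samePartSet_iff {x : Fin n → Circle1} :
    x ∈ samePartSet P ↔ ∀ i j, x i = x j ↔ i ∈ P.part j := by
  simp only [samePartSet, Set.mem_ofPred_eq, Finpartition.mem_part_iff_exists]

lemma measurableSet_samePartSet (P : Finpartition (Finset.univ : Finset (Fin n))) :
    MeasurableSet (samePartSet P) := by
  have measurable_apply_eq (i j : Fin n) : Measurable fun x : Fin n → Circle1 => x i = x j :=
    (measurableSet_eq_fun (measurable_pi_apply i) (measurable_pi_apply j)).mem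
  exact measurableSet_setOfPred.mpr <|
    .forall fun i => .forall fun j => (measurable_apply_eq i j).iff measurable_const

variable {P' : Finpartition (Finset.univ : Finset (Fin (n + 1)))}

lemma part_last_of_parts_eq_insert
    (hP' : P'.parts = insert {Fin.last n} (P.parts.image (Finset.map Fin.castSuccEmb))) :
    P'.part (Fin.last n) = {Fin.last n} :=
  P'.part_eq_of_mem (hP' ▸ Finset.mem_insert_self _ _) (Finset.mem_singleton_self _)

lemma part_castSucc_of_parts_eq_insert
    (hP' : P'.parts = insert {Fin.last n} (P.parts.image (Finset.map Fin.castSuccEmb)))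
    (i : Fin n) : P'.part i.castSucc = (P.part i).map Fin.castSuccEmb := by
  refine P'.part_eq_of_mem ?_ (Finset.mem_map_of_mem _ (P.mem_part (Finset.mem_univ i)))
  rw [hP']
  exact Finset.mem_insert_of_mem (Finset.mem_image_of_mem _ (P.part_mem.mpr (Finset.mem_univ i)))

lemma snoc_mem_samePartSet_iff
    (hP' : P'.parts = insert {Fin.last n} (P.parts.image (Finset.map Fin.castSuccEmb)))
    {x : Fin n → Circle1} {y : Circle1} :
    Fin.snoc (α := fun _ => Circle1) x y ∈ samePartSet P' ↔
      x ∈ samePartSet P ∧ y ∉ Set.range x := by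
  simp only [mem_samePartSet_iff, Fin.forall_fin_succ', Fin.snoc_castSucc, Fin.snoc_last,
    part_castSucc_of_parts_eq_insert hP', part_last_of_parts_eq_insert hP', Finset.mem_map,
    Fin.coe_castSuccEmb, Finset.mem_singleton, Fin.castSucc_inj, Fin.castSucc_ne_last,
    exists_eq_right, iff_false, and_false, exists_false, and_true, forall_and, Set.mem_range,
    not_exists, eq_comm (a := y), and_assoc, and_self]

lemma urnKernel_setOf_snoc_mem_samePartSet (τ : ℝ)
    (hP' : P'.parts = insert {Fin.last n} (P.parts.image (Finset.map Fin.castSuccEmb)))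
    (x : Fin n → Circle1) :
    urnKernel τ x {y | Fin.snoc (α := fun _ => Circle1) x y ∈ samePartSet P'} =
      (samePartSet P).indicator
        (fun _ => ENNReal.ofReal (1 - τ) / ENNReal.ofReal ((1 - τ) + n * τ)) x := by
  simp only [snoc_mem_samePartSet_iff hP']
  by_cases hx : x ∈ samePartSet P
  · simp only [hx, true_and, Set.indicator_of_mem]
    exact urnKernel_compl_range τ x
  · simp [hx]

end SamePartSet

/-- if `π'` is obtained from the partition `π` of `{1,…,n}` by adjoining
`{n+1}` as a new singleton block, then
`m_{n+1}(A_{π'}) = ((1−τ)/((1−τ)+nτ)) · m_n(A_π)`. -/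
theorem urnMeasure_extend_singleton (τ : ℝ) (hτ0 : 0 ≤ τ) (hτ1 : τ ≤ 1)
    (n : ℕ) (hn : 1 ≤ n)
    (P : Finpartition (Finset.univ : Finset (Fin n)))
    (P' : Finpartition (Finset.univ : Finset (Fin (n + 1))))
    (hP' : P'.parts =
      insert {Fin.last n} (P.parts.image (Finset.map Fin.castSuccEmb))) :
    urnMeasure τ (n + 1) (samePartSet P')
      = ENNReal.ofReal ((1 - τ) / ((1 - τ) + n * τ)) * urnMeasure τ n (samePartSet P) := by
  have total_pos : 0 < (1 - τ) + n * τ := by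
    have : (1 : ℝ) ≤ n := mod_cast hn
    nlinarith
  rw [urnMeasure_succ_apply τ hn (measurableSet_samePartSet P'),
    lintegral_congr (urnKernel_setOf_snoc_mem_samePartSet τ hP'),
    lintegral_indicator_const (measurableSet_samePartSet P), ENNReal.ofReal_div_of_pos total_pos]

end
end

section
/- Let P and Q be two probability measures on the space of Borel probability measures on S¹ (equipped with the topology of weak convergence and its Borel σ-algebra). Suppose that for every n ≥ 1 and every continuous function g : (Fin n → S¹) → ℝ, ∫ (∫ g dν^{⊗n}) dP(ν) = ∫ (∫ g dν^{⊗n}) dQ(ν), i.e. the moment measures E_P[ν^{⊗n}] and E_Q[ν^{⊗n}] coincide for all n. Then P = Q. -/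
open MeasureTheory

noncomputable section

/-- The space of Borel probability measures on the circle, with the topology of weak
convergence, carries its Borel σ-algebra. -/
instance : MeasurableSpace (ProbabilityMeasure Circle1) :=
  borel (ProbabilityMeasure Circle1)

/-!
For bounded continuous `f₁, …, fₙ`, integrating `f₁ ⊗ ⋯ ⊗ fₙ` against `ν^{⊗n}` gives
`∏ᵢ ∫ fᵢ dν`, so the moment measures determine the integrals of all such products. As functions
of `ν` these products are continuous and bounded, are closed under multiplication and separate
points; by Stone–Weierstrass they therefore determine a finite measure on a Polish space.
-/

open TopologicalSpace
open scoped BoundedContinuousFunction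

section SeparatingSubmonoid

variable {E : Type*} [TopologicalSpace E] [MeasurableSpace E]
  {P Q : Measure E} [IsFiniteMeasure P] [IsFiniteMeasure Q]

theorem integral_eq_of_mem_span [OpensMeasurableSpace E] {S : Set (E →ᵇ ℝ)}
    (hS : ∀ f ∈ S, ∫ x, f x ∂P = ∫ x, f x ∂Q) {f : E →ᵇ ℝ} (hf : f ∈ Submodule.span ℝ S) :
    ∫ x, f x ∂P = ∫ x, f x ∂Q := by
  induction hf using Submodule.span_induction with
  | mem f hf => exact hS f hf
  | zero => simp
  | add f g _ _ hf hg =>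
    simp only [BoundedContinuousFunction.coe_add, Pi.add_apply]
    rw [integral_add (f.integrable P) (g.integrable P),
      integral_add (f.integrable Q) (g.integrable Q), hf, hg]
  | smul c f _ hf =>
    simp only [BoundedContinuousFunction.coe_smul, integral_smul, hf]

theorem ext_of_forall_mem_submonoid_integral_eq [PolishSpace E] [BorelSpace E]
    (S : Submonoid (E →ᵇ ℝ)) (hsep : ∀ x y, x ≠ y → ∃ f ∈ S, f x ≠ f y)
    (hS : ∀ f ∈ S, ∫ x, f x ∂P = ∫ x, f x ∂Q) : P = Q := by
  let A : StarSubalgebra ℝ (E →ᵇ ℝ) :=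
    { Algebra.adjoin ℝ (S : Set (E →ᵇ ℝ)) with
      star_mem' := fun {f} hf => by
        have star_eq : star f = f := by ext; simp
        rwa [star_eq] }
  have mem_span_of_mem {f : E →ᵇ ℝ} (hf : f ∈ A) : f ∈ Submodule.span ℝ (S : Set (E →ᵇ ℝ)) := by
    rw [← S.closure_eq, ← Algebra.adjoin_eq_span]
    exact hf
  refine ext_of_forall_mem_subalgebra_integral_eq_of_polish (A := A) ?_
    fun f hf => integral_eq_of_mem_span hS (mem_span_of_mem hf)
  intro x y hxy
  obtain ⟨f, hf, hfxy⟩ := hsep x y hxy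
  exact ⟨f, ⟨f.toContinuousMap, ⟨f, Algebra.subset_adjoin hf, rfl⟩, rfl⟩, hfxy⟩

end SeparatingSubmonoid

section TensorProd

variable {ι : Type*} [Fintype ι] {X : ι → Type*} [∀ i, TopologicalSpace (X i)]

/-- The tensor product `x ↦ ∏ i, fᵢ (xᵢ)` of finitely many bounded continuous functions. -/
def tensorProd (f : ∀ i, X i →ᵇ ℝ) : (∀ i, X i) →ᵇ ℝ :=
  ∏ i, (f i).compContinuous (ContinuousMap.eval i)

theorem integral_pi_tensorProd [∀ i, MeasurableSpace (X i)] (μ : ∀ i, Measure (X i))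
    [∀ i, SigmaFinite (μ i)] (f : ∀ i, X i →ᵇ ℝ) :
    ∫ x, tensorProd f x ∂(Measure.pi μ) = ∏ i, ∫ x, f i x ∂(μ i) := by
  simpa [tensorProd] using integral_fintype_prod_eq_prod (μ := μ) fun i => f i

end TensorProd

section ProbabilityMeasures

variable {X : Type*} [TopologicalSpace X] [MeasurableSpace X]

theorem exists_integral_ne_of_ne [BorelSpace X] [HasOuterApproxClosed X]
    {μ ν : ProbabilityMeasure X} (hne : μ ≠ ν) :
    ∃ f : X →ᵇ ℝ, ∫ x, f x ∂(μ : Measure X) ≠ ∫ x, f x ∂(ν : Measure X) := by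
  contrapose! hne
  exact ProbabilityMeasure.toMeasure_injective (ext_of_forall_integral_eq_of_IsFiniteMeasure hne)

instance polishSpace_probabilityMeasure [CompactSpace X] [MetrizableSpace X] [BorelSpace X] :
    PolishSpace (ProbabilityMeasure X) := by
  let := metrizableSpaceMetric X
  let := metrizableSpaceMetric (ProbabilityMeasure X)
  infer_instance

section OpensMeasurable

variable [OpensMeasurableSpace X]

/-- The functional `ν ↦ ∫ f dν` on probability measures, as a bounded continuous function for the
topology of weak convergence. -/
def integralFunctional (f : X →ᵇ ℝ) : ProbabilityMeasure X →ᵇ ℝ :=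
  .ofNormedAddCommGroup (fun ν => ∫ x, f x ∂(ν : Measure X))
    (ProbabilityMeasure.continuous_integral_boundedContinuousFunction f) ‖f‖
    fun ν => f.norm_integral_le_norm (ν : Measure X)

@[simp]
theorem integralFunctional_apply (f : X →ᵇ ℝ) (ν : ProbabilityMeasure X) :
    integralFunctional f ν = ∫ x, f x ∂(ν : Measure X) := rfl

variable (X) in
/-- The monomials `ν ↦ ∏ i, ∫ fᵢ dν` of degree `n ≥ 1` in the functionals `integralFunctional f`.
The constant `1` is the monomial of degree one with `f = 1`. -/
def integralMonomials : Submonoid (ProbabilityMeasure X →ᵇ ℝ) where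
  carrier := {F | ∃ n : ℕ, 1 ≤ n ∧ ∃ f : Fin n → X →ᵇ ℝ, F = ∏ i, integralFunctional (f i)}
  one_mem' := ⟨1, le_rfl, fun _ => 1, by ext; simp⟩
  mul_mem' := by
    rintro _ _ ⟨m, hm, f, rfl⟩ ⟨n, -, g, rfl⟩
    exact ⟨m + n, by lia, Fin.append f g, by simp [Fin.prod_univ_add]⟩

theorem integralFunctional_mem_integralMonomials (f : X →ᵇ ℝ) :
    integralFunctional f ∈ integralMonomials X :=
  ⟨1, le_rfl, fun _ => f, by simp⟩

end OpensMeasurable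

end ProbabilityMeasures

theorem eq_of_moment_measures_eq_general {X : Type*} [TopologicalSpace X] [MeasurableSpace X]
    [BorelSpace X] [HasOuterApproxClosed X] [PolishSpace (ProbabilityMeasure X)]
    [MeasurableSpace (ProbabilityMeasure X)] [BorelSpace (ProbabilityMeasure X)]
    (P Q : Measure (ProbabilityMeasure X)) [IsFiniteMeasure P] [IsFiniteMeasure Q]
    (h : ∀ n : ℕ, 1 ≤ n → ∀ g : (Fin n → X) →ᵇ ℝ,
      ∫ ν, (∫ x, g x ∂(Measure.pi fun _ : Fin n => (ν : Measure X))) ∂P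
        = ∫ ν, (∫ x, g x ∂(Measure.pi fun _ : Fin n => (ν : Measure X))) ∂Q) :
    P = Q := by
  refine ext_of_forall_mem_submonoid_integral_eq (integralMonomials X) ?separates ?integral_eq
  case separates =>
    intro μ ν hne
    obtain ⟨f, hf⟩ := exists_integral_ne_of_ne hne
    exact ⟨integralFunctional f, integralFunctional_mem_integralMonomials f, hf⟩
  case integral_eq =>
    rintro _ ⟨n, hn, f, rfl⟩
    simpa [integral_pi_tensorProd] using h n hn (tensorProd f)

/-- two probability measures `P`, `Q` on the space of Borel probability
measures on `S¹` whose moment measures `E_P[ν^{⊗n}]` and `E_Q[ν^{⊗n}]` coincide for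
all `n ≥ 1` (tested against continuous functions) are equal. -/
theorem eq_of_moment_measures_eq
    (P Q : Measure (ProbabilityMeasure Circle1))
    (hP : IsProbabilityMeasure P) (hQ : IsProbabilityMeasure Q)
    (h : ∀ (n : ℕ), 1 ≤ n → ∀ g : (Fin n → Circle1) → ℝ, Continuous g →
      ∫ ν, (∫ x, g x ∂(Measure.pi fun _ : Fin n => (ν : Measure Circle1))) ∂P
        = ∫ ν, (∫ x, g x ∂(Measure.pi fun _ : Fin n => (ν : Measure Circle1))) ∂Q) :
    P = Q := by
  have : BorelSpace (ProbabilityMeasure Circle1) := ⟨rfl⟩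
  exact eq_of_moment_measures_eq_general P Q fun n hn g => h n hn g g.continuous

end
end

section
/- Let m be a probability measure on E₁ × E₂ with first marginal m₁ and J : L²(m₁) → L²(m) the isometry J g = g ∘ Prod.fst. Let (P_t)_{t≥0} and (P¹_t)_{t≥0} be strongly continuous contraction semigroups on L²(m) and L²(m₁) respectively (i.e. P_0 = id, P_{s+t} = P_s ∘ P_t, ‖P_t‖ ≤ 1, and t ↦ P_t f is continuous on [0,∞) for every f). Define the resolvents G_α f = ∫₀^∞ e^{−αt} (P_t f) dt and G¹_α g = ∫₀^∞ e^{−αt} (P¹_t g) dt (Bochner integrals) for α > 0. If G_α ∘ J = J ∘ G¹_α for all α > 0, then P_t ∘ J = J ∘ P¹_t for all t ≥ 0. -/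
open MeasureTheory

noncomputable section

/-!
For fixed `g`, both `t ↦ P t (J g)` and `t ↦ J (P₁ t g)` are continuous, and the hypothesis on the
resolvents says that they have the same Laplace transform, so everything rests on injectivity of
the Laplace transform for vector-valued functions. The substitution `x = exp (-t)` turns this into
a moment problem on `[0, 1]`: by the Weierstrass approximation theorem a function whose moments all
vanish is orthogonal to every test function, hence vanishes almost everywhere.
-/

section LaplaceTransform

open Set Filter Topology

variable {E : Type*} [NormedAddCommGroup E] [NormedSpace ℝ E]

theorem integral_eval_smul_eq_zero_of_forall_integral_pow_smul_eq_zero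
    {Ω : Type*} [MeasurableSpace Ω] {μ : Measure Ω} {u : Ω → ℝ} {ψ : Ω → E}
    (hint : ∀ n : ℕ, Integrable (fun x => u x ^ n • ψ x) μ)
    (hmom : ∀ n : ℕ, ∫ x, u x ^ n • ψ x ∂μ = 0) (p : Polynomial ℝ) :
    ∫ x, p.eval (u x) • ψ x ∂μ = 0 := by
  simp_rw [Polynomial.eval_eq_sum_range, Finset.sum_smul, mul_smul]
  rw [integral_finsetSum _ fun n _ => (hint n).fun_smul (p.coeff n)]
  simp [integral_smul, hmom]

theorem integrable_comp_smul_of_ae_mem_Icc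
    {Ω : Type*} [MeasurableSpace Ω] {μ : Measure Ω} {a b : ℝ} {u : Ω → ℝ} {ψ : Ω → E}
    (hu : AEMeasurable u μ) (hu_mem : ∀ᵐ x ∂μ, u x ∈ Icc a b) (hψ : Integrable ψ μ)
    {f : ℝ → ℝ} (hf : Continuous f) :
    Integrable (fun x => f (u x) • ψ x) μ := by
  obtain ⟨C, hC⟩ := isCompact_Icc.exists_bound_of_continuousOn (s := Icc a b) hf.continuousOn
  exact hψ.bdd_smul C (hf.comp_aestronglyMeasurable hu.aestronglyMeasurable)
    (hu_mem.mono fun x hx => hC (u x) hx)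

theorem integral_comp_smul_eq_zero_of_forall_integral_pow_smul_eq_zero
    {Ω : Type*} [MeasurableSpace Ω] {μ : Measure Ω} {a b : ℝ} {u : Ω → ℝ} {ψ : Ω → E}
    (hu : AEMeasurable u μ) (hu_mem : ∀ᵐ x ∂μ, u x ∈ Icc a b) (hψ : Integrable ψ μ)
    (hmom : ∀ n : ℕ, ∫ x, u x ^ n • ψ x ∂μ = 0) {f : ℝ → ℝ} (hf : Continuous f) :
    ∫ x, f (u x) • ψ x ∂μ = 0 := by
  have hint : ∀ {f : ℝ → ℝ}, Continuous f → Integrable (fun x => f (u x) • ψ x) μ :=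
    integrable_comp_smul_of_ae_mem_Icc hu hu_mem hψ
  have norm_le : ∀ δ > 0, ‖∫ x, f (u x) • ψ x ∂μ‖ ≤ δ * ∫ x, ‖ψ x‖ ∂μ := by
    intro δ hδ
    obtain ⟨p, hp⟩ := exists_polynomial_near_of_continuousOn a b f hf.continuousOn δ hδ
    have hp_int : ∫ x, p.eval (u x) • ψ x ∂μ = 0 :=
      integral_eval_smul_eq_zero_of_forall_integral_pow_smul_eq_zero
        (fun n => hint (continuous_pow n)) hmom p
    calc ‖∫ x, f (u x) • ψ x ∂μ‖
        = ‖∫ x, (p.eval (u x) - f (u x)) • ψ x ∂μ‖ := by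
          simp_rw [sub_smul]
          rw [integral_sub (hint p.continuous) (hint hf), hp_int, zero_sub, norm_neg]
      _ ≤ ∫ x, δ * ‖ψ x‖ ∂μ := by
          refine norm_integral_le_of_norm_le (hψ.norm.const_mul δ) (hu_mem.mono fun x hx => ?_)
          rw [norm_smul, Real.norm_eq_abs]
          gcongr
          exact (hp (u x) hx).le
      _ = δ * ∫ x, ‖ψ x‖ ∂μ := integral_const_mul δ _
  have bound_tendsto : Tendsto (fun δ : ℝ => δ * ∫ x, ‖ψ x‖ ∂μ) (𝓝[>] 0) (𝓝 0) :=
    ((continuous_mul_const _).tendsto' 0 0 (zero_mul _)).mono_left nhdsWithin_le_nhds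
  exact norm_le_zero_iff.1 (ge_of_tendsto bound_tendsto (eventually_mem_nhdsWithin.mono norm_le))

-- Since `Real.log 0 = 0`, the composite takes the value `g 0` at `0`.
theorem continuous_comp_neg_log {X : Type*} [TopologicalSpace X] {g : ℝ → X} (hg : Continuous g)
    (hg_lim : Tendsto g atTop (𝓝 (g 0))) : Continuous fun x => g (-Real.log x) := by
  refine continuous_iff_continuousAt.2 fun x => ?_
  rcases eq_or_ne x 0 with rfl | hx
  · rw [continuousAt_iff_punctured_nhds, Real.log_zero, neg_zero]
    exact hg_lim.comp (tendsto_neg_atBot_atTop.comp Real.tendsto_log_nhdsNE_zero)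
  · exact hg.continuousAt.comp (Real.continuousAt_log hx).neg

theorem setIntegral_smul_eq_zero_of_forall_integral_exp_neg_pow_smul_eq_zero {ψ : ℝ → E}
    (hψ : IntegrableOn ψ (Ioi 0))
    (hmom : ∀ n : ℕ, ∫ t in Ioi 0, Real.exp (-t) ^ n • ψ t = 0)
    {g : ℝ → ℝ} (hg : Continuous g) (hg_lim : Tendsto g atTop (𝓝 (g 0))) :
    ∫ t in Ioi 0, g t • ψ t = 0 := by
  have exp_neg_mem : ∀ᵐ t ∂volume.restrict (Ioi (0 : ℝ)), Real.exp (-t) ∈ Icc 0 1 :=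
    ae_restrict_of_forall_mem measurableSet_Ioi fun t ht =>
      ⟨(Real.exp_pos _).le, Real.exp_le_one_iff.2 (neg_nonpos.2 (le_of_lt ht))⟩
  simpa only [Real.log_exp, neg_neg] using
    integral_comp_smul_eq_zero_of_forall_integral_pow_smul_eq_zero
      (by fun_prop) exp_neg_mem hψ hmom (continuous_comp_neg_log hg hg_lim)

theorem ae_eq_zero_of_forall_integral_exp_neg_pow_smul_eq_zero [CompleteSpace E] {ψ : ℝ → E}
    (hψ : IntegrableOn ψ (Ioi 0))
    (hmom : ∀ n : ℕ, ∫ t in Ioi 0, Real.exp (-t) ^ n • ψ t = 0) :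
    ∀ᵐ t ∂volume.restrict (Ioi 0), ψ t = 0 := by
  refine (ae_restrict_iff' measurableSet_Ioi).2 <|
    isOpen_Ioi.ae_eq_zero_of_integral_contDiff_smul_eq_zero hψ.locallyIntegrableOn
      fun g hg hg_compact hg_supp => ?_
  have g_eq_zero : ∀ t ∉ Ioi (0 : ℝ), g t = 0 := fun t ht =>
    image_eq_zero_of_notMem_tsupport fun h => ht (hg_supp h)
  have g_lim : Tendsto g atTop (𝓝 (g 0)) := by
    rw [g_eq_zero 0 self_notMem_Ioi]
    exact hg_compact.is_zero_at_infty.mono_left atTop_le_cocompact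
  calc ∫ t, g t • ψ t
      = ∫ t in Ioi 0, g t • ψ t :=
        (setIntegral_eq_integral_of_forall_compl_eq_zero fun t ht => by
          rw [g_eq_zero t ht, zero_smul]).symm
    _ = 0 := setIntegral_smul_eq_zero_of_forall_integral_exp_neg_pow_smul_eq_zero hψ hmom
        hg.continuous g_lim

theorem ae_eq_zero_of_forall_laplace_eq_zero [CompleteSpace E] {φ : ℝ → E} {ω : ℝ}
    (hint : ∀ α > ω, IntegrableOn (fun t => Real.exp (-α * t) • φ t) (Ioi 0))
    (hφ : ∀ α > ω, ∫ t in Ioi 0, Real.exp (-α * t) • φ t = 0) :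
    ∀ᵐ t ∂volume.restrict (Ioi 0), φ t = 0 := by
  have exp_smul_ae : ∀ᵐ t ∂volume.restrict (Ioi 0), Real.exp (-(ω + 1) * t) • φ t = 0 := by
    refine ae_eq_zero_of_forall_integral_exp_neg_pow_smul_eq_zero (hint (ω + 1) (by simp))
      fun n => ?_
    have exp_shift (t : ℝ) :
        Real.exp (-t) ^ n * Real.exp (-(ω + 1) * t) = Real.exp (-(ω + 1 + n) * t) := by
      rw [← Real.exp_nat_mul, ← Real.exp_add]
      ring_nf
    simp_rw [smul_smul, exp_shift]
    exact hφ _ (by linarith [n.cast_nonneg (α := ℝ)])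
  filter_upwards [exp_smul_ae] with t ht
  exact (smul_eq_zero.1 ht).resolve_left (Real.exp_ne_zero _)

theorem eqOn_Ici_of_forall_laplace_eq [CompleteSpace E] {φ ψ : ℝ → E} {ω : ℝ}
    (hφ : ContinuousOn φ (Ici 0)) (hψ : ContinuousOn ψ (Ici 0))
    (hφ_int : ∀ α > ω, IntegrableOn (fun t => Real.exp (-α * t) • φ t) (Ioi 0))
    (hψ_int : ∀ α > ω, IntegrableOn (fun t => Real.exp (-α * t) • ψ t) (Ioi 0))
    (heq : ∀ α > ω, ∫ t in Ioi 0, Real.exp (-α * t) • φ t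
      = ∫ t in Ioi 0, Real.exp (-α * t) • ψ t) :
    EqOn φ ψ (Ici 0) := by
  have sub_ae : ∀ᵐ t ∂volume.restrict (Ioi 0), φ t - ψ t = 0 := by
    refine ae_eq_zero_of_forall_laplace_eq_zero (ω := ω) (fun α hα => ?_) fun α hα => ?_
    · simp_rw [smul_sub]
      exact (hφ_int α hα).sub (hψ_int α hα)
    · simp_rw [smul_sub]
      rw [integral_sub (hφ_int α hα) (hψ_int α hα), heq α hα, sub_self]
  have eqOn_Ioi : EqOn φ ψ (Ioi 0) :=
    Measure.eqOn_open_of_ae_eq (sub_ae.mono fun _ => sub_eq_zero.1) isOpen_Ioi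
      (hφ.mono Ioi_subset_Ici_self) (hψ.mono Ioi_subset_Ici_self)
  exact eqOn_Ioi.of_subset_closure hφ hψ Ioi_subset_Ici_self (closure_Ioi 0).ge

theorem integrableOn_exp_neg_mul_smul_of_norm_le {φ : ℝ → E} {C ω α : ℝ}
    (hφ : ContinuousOn φ (Ioi 0)) (hφ_norm : ∀ t > 0, ‖φ t‖ ≤ C * Real.exp (ω * t))
    (hα : ω < α) : IntegrableOn (fun t => Real.exp (-α * t) • φ t) (Ioi 0) := by
  have majorant_int : IntegrableOn (fun t => C * Real.exp ((ω - α) * t)) (Ioi 0) :=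
    (integrableOn_exp_mul_Ioi (sub_neg.2 hα) 0).const_mul C
  have smul_cont : ContinuousOn (fun t => Real.exp (-α * t) • φ t) (Ioi 0) :=
    ContinuousOn.smul (by fun_prop) hφ
  refine Integrable.mono' majorant_int (smul_cont.aestronglyMeasurable measurableSet_Ioi)
    (ae_restrict_of_forall_mem measurableSet_Ioi fun t ht => ?_)
  calc ‖Real.exp (-α * t) • φ t‖
      = Real.exp (-α * t) * ‖φ t‖ := by rw [norm_smul, Real.norm_eq_abs, Real.abs_exp]
    _ ≤ Real.exp (-α * t) * (C * Real.exp (ω * t)) := by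
        gcongr
        exact hφ_norm t ht
    _ = C * Real.exp ((ω - α) * t) := by
        rw [mul_left_comm, ← Real.exp_add]
        ring_nf

theorem integrableOn_exp_neg_mul_smul_orbit
    {F : Type*} [NormedAddCommGroup F] [NormedSpace ℝ F] {P : ℝ → F →L[ℝ] E} {M ω α : ℝ}
    (hP_norm : ∀ t : ℝ, 0 ≤ t → ‖P t‖ ≤ M * Real.exp (ω * t))
    (hP_cont : ∀ x, ContinuousOn (fun t => P t x) (Ici 0)) (hα : ω < α) (x : F) :
    IntegrableOn (fun t => Real.exp (-α * t) • P t x) (Ioi 0) := by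
  refine integrableOn_exp_neg_mul_smul_of_norm_le (C := M * ‖x‖)
    ((hP_cont x).mono Ioi_subset_Ici_self) (fun t ht => ?_) hα
  rw [mul_right_comm]
  exact (P t).le_of_opNorm_le (hP_norm t (le_of_lt ht)) x

end LaplaceTransform

theorem semigroup_intertwines_of_resolvent_intertwines_general
    {X Y : Type*} [NormedAddCommGroup X] [NormedSpace ℝ X] [CompleteSpace X]
    [NormedAddCommGroup Y] [NormedSpace ℝ Y] [CompleteSpace Y]
    (J : X →L[ℝ] Y) (P : ℝ → Y →L[ℝ] Y) (P₁ : ℝ → X →L[ℝ] X) (M ω : ℝ)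
    (hP_norm : ∀ t : ℝ, 0 ≤ t → ‖P t‖ ≤ M * Real.exp (ω * t))
    (hP_cont : ∀ y, ContinuousOn (fun t => P t y) (Set.Ici 0))
    (hP₁_norm : ∀ t : ℝ, 0 ≤ t → ‖P₁ t‖ ≤ M * Real.exp (ω * t))
    (hP₁_cont : ∀ x, ContinuousOn (fun t => P₁ t x) (Set.Ici 0))
    (hres : ∀ α : ℝ, ω < α → ∀ x : X,
      (∫ t in Set.Ioi (0 : ℝ), Real.exp (-α * t) • P t (J x))
        = J (∫ t in Set.Ioi (0 : ℝ), Real.exp (-α * t) • P₁ t x)) :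
    ∀ t : ℝ, 0 ≤ t → ∀ x, P t (J x) = J (P₁ t x) := by
  intro t ht x
  have orbit_int : ∀ α > ω,
      IntegrableOn (fun t => Real.exp (-α * t) • P₁ t x) (Set.Ioi 0) := fun α hα =>
    integrableOn_exp_neg_mul_smul_orbit hP₁_norm hP₁_cont hα x
  refine eqOn_Ici_of_forall_laplace_eq (ψ := fun t => J (P₁ t x)) (hP_cont (J x))
    (J.continuous.comp_continuousOn (hP₁_cont x))
    (fun α hα => integrableOn_exp_neg_mul_smul_orbit hP_norm hP_cont hα (J x))
    (fun α hα => ?_) (fun α hα => ?_) ht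
  · simpa only [IntegrableOn, map_smul] using J.integrable_comp (orbit_int α hα)
  · simp_rw [hres α hα x, ← J.integral_comp_comm (orbit_int α hα), map_smul]

/-- let `m` be a probability measure on `E₁ × E₂` with first marginal
`m₁ = m.map Prod.fst` and `J : L²(m₁) → L²(m)` the isometry `J g = g ∘ Prod.fst`.  Let
`(P_t)` and `(P¹_t)` be strongly continuous contraction semigroups on `L²(m)` and
`L²(m₁)`, with resolvents `G_α f = ∫₀^∞ e^{−αt} P_t f dt`, `G¹_α g = ∫₀^∞ e^{−αt} P¹_t g dt`
(Bochner integrals).  If `G_α ∘ J = J ∘ G¹_α` for all `α > 0`, then `P_t ∘ J = J ∘ P¹_t`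
for all `t ≥ 0`. -/
theorem semigroup_intertwines_of_resolvent_intertwines
    {E₁ E₂ : Type*} [MeasurableSpace E₁] [MeasurableSpace E₂]
    (m : Measure (E₁ × E₂)) [IsProbabilityMeasure m]
    (J : Lp ℝ 2 (m.map Prod.fst) →L[ℝ] Lp ℝ 2 m)
    (hJ : ∀ g : Lp ℝ 2 (m.map Prod.fst), (J g : E₁ × E₂ → ℝ) =ᵐ[m] fun p => g p.1)
    (P : ℝ → Lp ℝ 2 m →L[ℝ] Lp ℝ 2 m)
    (P₁ : ℝ → Lp ℝ 2 (m.map Prod.fst) →L[ℝ] Lp ℝ 2 (m.map Prod.fst))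
    (hP0 : P 0 = ContinuousLinearMap.id ℝ _)
    (hPadd : ∀ s t : ℝ, 0 ≤ s → 0 ≤ t → P (s + t) = (P s).comp (P t))
    (hPcontr : ∀ t : ℝ, 0 ≤ t → ‖P t‖ ≤ 1)
    (hPcont : ∀ f, ContinuousOn (fun t : ℝ => P t f) (Set.Ici 0))
    (hP₁0 : P₁ 0 = ContinuousLinearMap.id ℝ _)
    (hP₁add : ∀ s t : ℝ, 0 ≤ s → 0 ≤ t → P₁ (s + t) = (P₁ s).comp (P₁ t))
    (hP₁contr : ∀ t : ℝ, 0 ≤ t → ‖P₁ t‖ ≤ 1)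
    (hP₁cont : ∀ g, ContinuousOn (fun t : ℝ => P₁ t g) (Set.Ici 0))
    (hres : ∀ α : ℝ, 0 < α → ∀ g : Lp ℝ 2 (m.map Prod.fst),
      (∫ t in Set.Ioi (0 : ℝ), Real.exp (-α * t) • P t (J g))
        = J (∫ t in Set.Ioi (0 : ℝ), Real.exp (-α * t) • P₁ t g)) :
    ∀ t : ℝ, 0 ≤ t → ∀ g, P t (J g) = J (P₁ t g) := by
  exact semigroup_intertwines_of_resolvent_intertwines_general J P P₁ 1 0
    (by simpa using hPcontr) hPcont (by simpa using hP₁contr) hP₁cont hres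

end
end
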